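/- Let k ≥ 2 be an integer. Then |S_{2^k}| = 2^{k−1} + 1 and |N_{2^k}| = 2^{k−1} − 1. -/

import Mathlib

/-- `S_n`: the set of elements of `ℤ/nℤ` expressible as a sum of two squares. -/
def sumTwoSquares (n : ℕ) : Set (ZMod n) := {m | ∃ x y : ZMod n, m = x ^ 2 + y ^ 2}

/-- `N_n`: the set of elements of `ℤ/nℤ` not expressible as a sum of two squares. -/
def notSumTwoSquares (n : ℕ) : Set (ZMod n) := (sumTwoSquares n)ᶜ

/-!
Doubling identifies the even sums of two squares modulo `2n` with the sums of two squares modulo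
`n`, through `2 * (a ^ 2 + b ^ 2) = (a + b) ^ 2 + (a - b) ^ 2`. An odd number `m` is a sum of two
squares modulo `2 ^ (k + 2)` if and only if it is `1` modulo `4`: the condition is necessary already
modulo `4`, and conversely `m` or `m - 2 ^ 2` is then `1` modulo `8`, hence a `2`-adic square by
Hensel's lemma. So `|S_{2 ^ (k + 2)}| = |S_{2 ^ (k + 1)}| + 2 ^ k`, starting from `|S_2| = 2`.
-/

open Polynomial in
theorem padicInt_isSquare_of_norm_sub_sq_lt {p : ℕ} [Fact p.Prime] {a b : ℤ_[p]}
    (hab : ‖a - b ^ 2‖ < ‖2 * b‖ ^ 2) : IsSquare a := by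
  have hnorm : ‖(X ^ 2 - C a).aeval b‖ < ‖(X ^ 2 - C a).derivative.aeval b‖ ^ 2 := by
    simpa [norm_sub_rev, one_add_one_eq_two] using hab
  obtain ⟨z, hz, -⟩ := hensels_lemma hnorm
  exact ⟨z, by simpa [sub_eq_zero, sq, eq_comm] using hz⟩

theorem isSquare_intCast_zmod_two_pow (k : ℕ) {m : ℤ} (hm : m ≡ 1 [ZMOD 8]) :
    IsSquare (m : ZMod (2 ^ k)) := by
  have hsq : IsSquare (m : ℤ_[2]) := by
    refine padicInt_isSquare_of_norm_sub_sq_lt (b := 1) ?_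
    calc ‖(m : ℤ_[2]) - 1 ^ 2‖ = ‖((m - 1 : ℤ) : ℤ_[2])‖ := by simp
      _ ≤ (2 : ℕ) ^ (-(3 : ℕ) : ℤ) := PadicInt.norm_int_le_pow_iff_dvd.2 hm.symm.dvd
      _ < ‖((2 : ℕ) : ℤ_[2])‖ ^ 2 := by rw [PadicInt.norm_p]; norm_num
      _ = ‖(2 : ℤ_[2]) * 1‖ ^ 2 := by simp
  simpa using hsq.map (PadicInt.toZModPow k)

theorem card_eq_count_natCast_mem {n : ℕ} [NeZero n] (s : Set (ZMod n))
    [DecidablePred fun m : ℕ ↦ (m : ZMod n) ∈ s] :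
    Nat.card s = Nat.count (fun m : ℕ ↦ (m : ZMod n) ∈ s) n := by
  classical
  rw [Nat.count_eq_card_fintype, Fintype.card_eq_nat_card]
  exact Nat.card_congr
    { toFun x := ⟨x.1.val, x.1.val_lt, by simp⟩
      invFun m := ⟨m, m.2.2⟩
      left_inv x := by simp
      right_inv m := Subtype.ext (ZMod.val_cast_of_lt m.2.1) }

theorem count_two_mul (p : ℕ → Prop) [DecidablePred p] (n : ℕ) :
    Nat.count p (2 * n) =
      Nat.count (fun m ↦ p (2 * m)) n + Nat.count (fun m ↦ p (2 * m + 1)) n := by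
  induction n with
  | zero => simp
  | succ n ih =>
    simp only [Nat.mul_succ, Nat.count_succ, ih]
    omega

theorem count_even (n : ℕ) : Nat.count Even (2 * n) = n := by
  simp [count_two_mul]

theorem sumTwoSquares_eq_univ_of_prime (p : ℕ) [Fact p.Prime] : sumTwoSquares p = Set.univ :=
  Set.eq_univ_of_forall fun m ↦
    let ⟨x, y, h⟩ := ZMod.sq_add_sq p m
    ⟨x, y, h.symm⟩

theorem intCast_mem_sumTwoSquares_iff {n : ℕ} {m : ℤ} :
    (m : ZMod n) ∈ sumTwoSquares n ↔ ∃ x y : ℤ, m ≡ x ^ 2 + y ^ 2 [ZMOD n] := by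
  simp only [sumTwoSquares, Set.mem_ofPred_eq, ZMod.intCast_surjective.exists,
    ← ZMod.intCast_eq_intCast_iff, Int.cast_add, Int.cast_pow]

theorem intCast_two_mul_mem_sumTwoSquares_iff {n : ℕ} {m : ℤ} :
    ((2 * m : ℤ) : ZMod (2 * n)) ∈ sumTwoSquares (2 * n) ↔ (m : ZMod n) ∈ sumTwoSquares n := by
  simp only [intCast_mem_sumTwoSquares_iff, Int.modEq_iff_dvd, Nat.cast_mul, Nat.cast_two]
  constructor
  · rintro ⟨x, y, c, hc⟩
    have hdouble : 2 * (m + n * c) = x ^ 2 + y ^ 2 := by linear_combination -hc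
    have hhalf := Int.sq_add_sq_of_two_mul_sq_add_sq hdouble
    exact ⟨(x - y) / 2, (x + y) / 2, c, by linear_combination -hhalf⟩
  · rintro ⟨a, b, c, hc⟩
    exact ⟨a + b, a - b, c, by linear_combination 2 * hc⟩

theorem intCast_notMem_sumTwoSquares {n : ℕ} (hn : 4 ∣ n) {m : ℤ} (hm : m ≡ 3 [ZMOD 4]) :
    (m : ZMod n) ∉ sumTwoSquares n := by
  rintro ⟨x, y, hxy⟩
  have hmod4 := congrArg (ZMod.castHom hn (ZMod 4)) hxy
  have hm4 : (m : ZMod 4) = 3 := mod_cast (ZMod.intCast_eq_intCast_iff m 3 4).2 hm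
  have hne : ∀ x y : ZMod 4, 3 ≠ x ^ 2 + y ^ 2 := by decide
  rw [map_intCast, hm4, map_add, map_pow, map_pow] at hmod4
  exact hne _ _ hmod4

theorem intCast_mem_sumTwoSquares_two_pow (k : ℕ) {m : ℤ} (hm : m ≡ 1 [ZMOD 4]) :
    (m : ZMod (2 ^ k)) ∈ sumTwoSquares (2 ^ k) := by
  obtain ⟨y, hy⟩ : ∃ y : ℤ, m - y ^ 2 ≡ 1 [ZMOD 8] := by
    have hcases : m ≡ 1 [ZMOD 8] ∨ m ≡ 5 [ZMOD 8] := by unfold Int.ModEq at *; omega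
    rcases hcases with h | h
    · exact ⟨0, by simpa using h⟩
    · exact ⟨2, h.sub_right 4⟩
  obtain ⟨x, hx⟩ := isSquare_intCast_zmod_two_pow k hy
  exact ⟨x, y, by push_cast at hx; linear_combination hx⟩

theorem intCast_two_mul_add_one_mem_sumTwoSquares_two_pow_iff {k : ℕ} {m : ℤ} :
    ((2 * m + 1 : ℤ) : ZMod (2 ^ (k + 2))) ∈ sumTwoSquares (2 ^ (k + 2)) ↔ Even m := by
  constructor
  · contrapose!
    intro hm
    obtain ⟨j, rfl⟩ := Int.not_even_iff_odd.1 hm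
    refine intCast_notMem_sumTwoSquares (pow_dvd_pow 2 (Nat.le_add_left 2 k)) ?_
    unfold Int.ModEq
    omega
  · rintro ⟨j, rfl⟩
    refine intCast_mem_sumTwoSquares_two_pow (k + 2) ?_
    unfold Int.ModEq
    omega

theorem card_sumTwoSquares_two_pow_add_two (k : ℕ) :
    Nat.card (sumTwoSquares (2 ^ (k + 2))) = Nat.card (sumTwoSquares (2 ^ (k + 1))) + 2 ^ k := by
  classical
  have heven (m : ℕ) : ((2 * m : ℕ) : ZMod (2 ^ (k + 2))) ∈ sumTwoSquares (2 ^ (k + 2)) ↔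
      (m : ZMod (2 ^ (k + 1))) ∈ sumTwoSquares (2 ^ (k + 1)) := by
    rw [pow_succ' 2 (k + 1)]
    exact mod_cast intCast_two_mul_mem_sumTwoSquares_iff (m := m)
  have hodd (m : ℕ) : ((2 * m + 1 : ℕ) : ZMod (2 ^ (k + 2))) ∈ sumTwoSquares (2 ^ (k + 2)) ↔
      Even m :=
    mod_cast intCast_two_mul_add_one_mem_sumTwoSquares_two_pow_iff (k := k) (m := m)
  have hcount : Nat.count Even (2 ^ (k + 1)) = 2 ^ k := by
    rw [pow_succ', count_even]
  calc Nat.card (sumTwoSquares (2 ^ (k + 2)))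
    _ = Nat.count (fun m : ℕ ↦ (m : ZMod (2 ^ (k + 2))) ∈ sumTwoSquares (2 ^ (k + 2)))
          (2 * 2 ^ (k + 1)) := by rw [card_eq_count_natCast_mem, pow_succ' 2 (k + 1)]
    _ = Nat.count (fun m : ℕ ↦ (m : ZMod (2 ^ (k + 1))) ∈ sumTwoSquares (2 ^ (k + 1)))
          (2 ^ (k + 1)) + Nat.count Even (2 ^ (k + 1)) := by
      rw [count_two_mul]
      simp only [heven, hodd]
    _ = Nat.card (sumTwoSquares (2 ^ (k + 1))) + 2 ^ k := by
      rw [card_eq_count_natCast_mem, hcount]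

theorem card_sumTwoSquares_two_pow_succ (k : ℕ) :
    Nat.card (sumTwoSquares (2 ^ (k + 1))) = 2 ^ k + 1 := by
  induction k with
  | zero => simp [sumTwoSquares_eq_univ_of_prime]
  | succ k ih =>
    rw [card_sumTwoSquares_two_pow_add_two, ih]
    ring

theorem card_notSumTwoSquares (n : ℕ) [NeZero n] :
    Nat.card (notSumTwoSquares n) = n - Nat.card (sumTwoSquares n) := by
  simpa [notSumTwoSquares] using Set.ncard_compl (sumTwoSquares n)

theorem card_sumTwoSquares_two_pow_general (k : ℕ) :
    Nat.card (sumTwoSquares (2 ^ (k + 1))) = 2 ^ k + 1 ∧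
    Nat.card (notSumTwoSquares (2 ^ (k + 1))) = 2 ^ k - 1 := by
  have hcard := card_sumTwoSquares_two_pow_succ k
  refine ⟨hcard, ?_⟩
  rw [card_notSumTwoSquares, hcard]
  omega

/-- For `k ≥ 2`, `|S_{2^k}| = 2^(k-1) + 1` and `|N_{2^k}| = 2^(k-1) - 1`. -/
theorem card_sumTwoSquares_two_pow (k : ℕ) (hk : 2 ≤ k) :
    Nat.card (sumTwoSquares (2 ^ k)) = 2 ^ (k - 1) + 1 ∧
    Nat.card (notSumTwoSquares (2 ^ k)) = 2 ^ (k - 1) - 1 := by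
  obtain ⟨j, rfl⟩ := Nat.exists_eq_add_of_le' (one_le_two.trans hk)
  exact card_sumTwoSquares_two_pow_general j
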